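/- Let n, N ≥ 1 and write X = L²(ℝⁿ; ℂᴺ). Let D : Dom(D) ⊆ X → X be a densely defined linear operator (a first order system) and let V : ℝ → B(X) be a C₀ group generated by iD satisfying ‖V(t)u‖₂ ≤ c·e^{ω|t|}·‖u‖₂ for all t ∈ ℝ and u ∈ X, for some c ≥ 1 and ω ≥ 0. Suppose there is κ > 0 such that for every bounded real-valued C^∞ function η on ℝⁿ with bounded gradient: η·u ∈ Dom(D) for every u ∈ Dom(D), the commutator [M_η, D]u := η·(Du) − D(η·u) is given by multiplication by a fixed essentially bounded measurable matrix-valued function m_η : ℝⁿ → ℂ^{N×N} (i.e. [M_η,D]u = m_η·u a.e. for all u ∈ Dom(D)), and ‖[M_η,D]u‖₂ ≤ κ·‖∇η‖_∞·‖u‖₂ for all u ∈ Dom(D). Then the group V has finite propagation speed at most cκ: for every closed set K ⊆ ℝⁿ, every u ∈ X vanishing a.e. outside K, and every t ∈ ℝ, V(t)u vanishes a.e. outside {x ∈ ℝⁿ : dist(x,K) ≤ cκ|t|}. -/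

import Mathlib

/-!
Let `M` be multiplication by a bounded smooth `1`-Lipschitz function `η`, let `A` generate `V`, and
let `B = ⁅M, A⁆`, which has norm at most `κ` and commutes with `M`. The iterated commutators
`E_m(t) = ad_M^m (V t)` satisfy `E_m' = A E_m + m B E_{m-1}` with `E_m(0) = 0` for `m ≥ 1`, so
Duhamel's formula and induction give `‖E_m(t)‖ ≤ c e^{ω|t|} (cκ|t|)^m`. If `η` vanishes on the
support of `u`, then `M u = 0` and `E_m(t) u = η^m V(t) u`. Letting `m → ∞`, this growth rate forces
`V(t) u` to vanish where `|η| > cκ|t|`. It remains to let `η` approximate the distance to `K`.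
-/

open MeasureTheory Complex

open Filter Topology
open scoped NNReal ENNReal Convolution

section StrongProductRule

variable {𝕜 X Y : Type*} [RCLike 𝕜] [NormedAddCommGroup X] [NormedSpace 𝕜 X]
  [NormedAddCommGroup Y] [NormedSpace 𝕜 Y]

theorem tendsto_clm_apply_of_norm_le {ι : Type*} {l : Filter ι} {T : ι → X →L[𝕜] Y} {C : ℝ}
    (hT : ∀ᶠ i in l, ‖T i‖ ≤ C) {x : ι → X} {x₀ : X} {y : Y} (hx : Tendsto x l (𝓝 x₀))
    (hy : Tendsto (fun i => T i x₀) l (𝓝 y)) : Tendsto (fun i => T i (x i)) l (𝓝 y) := by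
  have hdiff : Tendsto (fun i => T i (x i - x₀)) l (𝓝 0) := by
    refine squeeze_zero_norm' (hT.mono fun i hi => (T i).le_of_opNorm_le hi _) ?_
    simpa using (tendsto_iff_norm_sub_tendsto_zero.1 hx).const_mul C
  simpa using hdiff.add hy

theorem hasDerivAt_clm_apply_of_norm_le [NormedSpace ℝ X] [IsScalarTower ℝ 𝕜 X]
    [NormedSpace ℝ Y] [IsScalarTower ℝ 𝕜 Y] {W : ℝ → X →L[𝕜] Y} {f : ℝ → X} {f' : X} {w' : Y}
    {s C : ℝ} (hW : ∀ᶠ r in 𝓝 s, ‖W r‖ ≤ C) (hcont : ContinuousAt (fun r => W r f') s)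
    (hderiv : HasDerivAt (fun r => W r (f s)) w' s) (hf : HasDerivAt f f' s) :
    HasDerivAt (fun r => W r (f r)) (w' + W s f') s := by
  have hincr : HasDerivAt (fun r => W r (f r - f s)) (W s f') s := by
    have hslope : slope (fun r => W r (f r - f s)) s = fun r => W r (slope f s r) := by
      ext r
      simp only [slope, vsub_eq_sub, sub_self, map_zero, sub_zero,
        ContinuousLinearMap.map_smul_of_tower]
    rw [hasDerivAt_iff_tendsto_slope, hslope]
    exact tendsto_clm_apply_of_norm_le (hW.filter_mono nhdsWithin_le_nhds)
      (hasDerivAt_iff_tendsto_slope.1 hf) (hcont.mono_left nhdsWithin_le_nhds)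
  simpa using hderiv.fun_add hincr

end StrongProductRule

section IteratedCommutator

variable {R : Type*} [Ring R]

/-- The `m`-fold commutator `⁅x, ⁅x, …, ⁅x, y⁆ … ⁆⁆` in a ring. -/
def iteratedCommutator (x : R) (m : ℕ) (y : R) : R :=
  (fun z => ⁅x, z⁆)^[m] y

theorem iteratedCommutator_zero (x y : R) : iteratedCommutator x 0 y = y :=
  rfl

theorem iteratedCommutator_succ (x : R) (m : ℕ) (y : R) :
    iteratedCommutator x (m + 1) y = x * iteratedCommutator x m y - iteratedCommutator x m y * x :=
  Function.iterate_succ_apply' _ m y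

theorem iteratedCommutator_succ_one (x : R) (m : ℕ) : iteratedCommutator x (m + 1) 1 = 0 := by
  induction m with
  | zero => simp [iteratedCommutator_succ, iteratedCommutator_zero]
  | succ m ih => rw [iteratedCommutator_succ, ih, mul_zero, zero_mul, sub_zero]

end IteratedCommutator

section PartiallyDefined

variable {R X Y : Type*} [Ring R] [AddCommGroup X] [Module R X] [AddCommGroup Y] [Module R Y]

/-- The partially defined linear map obtained from a function that is linear on a submodule `S`;
its values outside `S` are ignored. -/
def linearPMapOn (S : Submodule R X) (f : X → Y) (hadd : ∀ u ∈ S, ∀ v ∈ S, f (u + v) = f u + f v)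
    (hsmul : ∀ a : R, ∀ u ∈ S, f (a • u) = a • f u) : X →ₗ.[R] Y where
  domain := S
  toFun :=
    { toFun := fun u => f u
      map_add' := fun u v => hadd u u.2 v v.2
      map_smul' := fun a u => hsmul a u u.2 }

end PartiallyDefined

section C0Group

variable {𝕜 X : Type*} [RCLike 𝕜] [NormedAddCommGroup X] [NormedSpace 𝕜 X]

/-- `B` is the commutator `⁅M, A⁆` of a bounded operator `M` with an unbounded operator `A`: `M`
preserves the domain of `A`, and `A (M u) = M (A u) - B u` there. Both facts are encoded at once
through the graph of `A`, so that no membership proofs appear in arguments of `A`. -/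
def HasCommutator (A : X →ₗ.[𝕜] X) (M B : X →L[𝕜] X) : Prop :=
  ∀ q ∈ A.graph, (M q.1, M q.2 - B q.1) ∈ A.graph

theorem mem_graph_smul_iff {A : X →ₗ.[𝕜] X} {a : 𝕜} {q : X × X} :
    q ∈ (a • A).graph ↔ ∃ y, (q.1, y) ∈ A.graph ∧ a • y = q.2 := by
  simp [LinearPMap.mem_graph_iff]

theorem HasCommutator.smul {A : X →ₗ.[𝕜] X} {M B : X →L[𝕜] X} (h : HasCommutator A M B) (a : 𝕜) :
    HasCommutator (a • A) M (a • B) := by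
  intro q hq
  obtain ⟨y, hy, hyq⟩ := mem_graph_smul_iff.1 hq
  exact mem_graph_smul_iff.2 ⟨_, h (q.1, y) hy, by simp [← hyq, smul_sub]⟩

theorem mem_graph_neg_iff {A : X →ₗ.[𝕜] X} {q : X × X} :
    q ∈ (-A).graph ↔ (q.1, -q.2) ∈ A.graph := by
  simp [LinearPMap.mem_graph_iff, neg_eq_iff_eq_neg]

theorem HasCommutator.neg {A : X →ₗ.[𝕜] X} {M B : X →L[𝕜] X} (h : HasCommutator A M B) :
    HasCommutator (-A) M (-B) := by
  intro q hq
  have := h _ (mem_graph_neg_iff.1 hq)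
  rw [mem_graph_neg_iff]
  convert this using 2
  simp only [map_neg, neg_apply, sub_neg_eq_add, neg_add']

theorem iteratedCommutator_succ_apply (M : X →L[𝕜] X) (m : ℕ) (T : X →L[𝕜] X) (u : X) :
    iteratedCommutator M (m + 1) T u
      = M (iteratedCommutator M m T u) - iteratedCommutator M m T (M u) := by
  rw [iteratedCommutator_succ]; rfl

theorem iteratedCommutator_apply_of_apply_eq_zero {M : X →L[𝕜] X} {u : X} (hu : M u = 0)
    (T : X →L[𝕜] X) (m : ℕ) : iteratedCommutator M m T u = (M ^ m) (T u) := by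
  induction m with
  | zero => rfl
  | succ m ih => simp [iteratedCommutator_succ_apply, hu, ih, pow_succ']

variable [NormedSpace ℝ X]

/-- `V` is a `C₀` group generated by `A` on the domain of `A`, where `A` need not be closed. That
`V t` preserves the domain and commutes with `A` is the invariance of the graph of `A`. -/
structure IsC0Group (A : X →ₗ.[𝕜] X) (V : ℝ → X →L[𝕜] X) : Prop where
  apply_zero : V 0 = 1
  apply_add : ∀ s t, V (s + t) = V s * V t
  continuous_apply : ∀ u, Continuous fun t => V t u
  map_mem_graph : ∀ t, ∀ q ∈ A.graph, (V t q.1, V t q.2) ∈ A.graph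
  hasDerivAt : ∀ t, ∀ q ∈ A.graph, HasDerivAt (fun s => V s q.1) (V t q.2) t

theorem isC0Group_smul_of_domain {A : X →ₗ.[𝕜] X} {V : ℝ → X →L[𝕜] X} {a : 𝕜} (hzero : V 0 = 1)
    (hadd : ∀ s t, V (s + t) = V s * V t) (hcont : ∀ u, Continuous fun t => V t u)
    (hcomm : ∀ t (v : A.domain), ∃ h : V t v ∈ A.domain, V t (A v) = A ⟨V t v, h⟩)
    (hderiv : ∀ t (v : A.domain), HasDerivAt (fun s => V s v) (a • V t (A v)) t) :
    IsC0Group (a • A) V where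
  apply_zero := hzero
  apply_add := hadd
  continuous_apply := hcont
  map_mem_graph t := by
    rintro ⟨_, _⟩ hq
    obtain ⟨v, rfl, rfl⟩ := (LinearPMap.mem_graph_iff _).1 hq
    obtain ⟨h, hVA⟩ := hcomm t v
    exact (LinearPMap.mem_graph_iff _).2 ⟨⟨V t v, h⟩, rfl, by simp [hVA]⟩
  hasDerivAt t := by
    rintro ⟨_, _⟩ hq
    obtain ⟨v, rfl, rfl⟩ := (LinearPMap.mem_graph_iff _).1 hq
    simpa using hderiv t v

namespace IsC0Group

variable {A : X →ₗ.[𝕜] X} {V : ℝ → X →L[𝕜] X} {M B : X →L[𝕜] X} {b c ω : ℝ}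

theorem reverse (hV : IsC0Group A V) : IsC0Group (-A) fun t => V (-t) where
  apply_zero := by simp [hV.apply_zero]
  apply_add s t := by rw [neg_add, hV.apply_add]
  continuous_apply u := (hV.continuous_apply u).comp continuous_neg
  map_mem_graph t q hq := by
    have := hV.map_mem_graph (-t) _ (mem_graph_neg_iff.1 hq)
    rwa [mem_graph_neg_iff, ← map_neg]
  hasDerivAt t q hq := by
    have := (hV.hasDerivAt (-t) _ (mem_graph_neg_iff.1 hq)).scomp t (hasDerivAt_neg t)
    simpa [Function.comp_def] using this

variable [IsScalarTower ℝ 𝕜 X]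

theorem hasDerivAt_sub_apply (hV : IsC0Group A V) (hbound : ∀ t, ‖V t‖ ≤ c * Real.exp (ω * |t|))
    (t : ℝ) {s : ℝ} {f : ℝ → X} {f' w : X} (hw : (f s, w) ∈ A.graph) (hf : HasDerivAt f f' s) :
    HasDerivAt (fun r => V (t - r) (f r)) (V (t - s) (f' - w)) s := by
  have hlocal : ∀ᶠ r in 𝓝 s, ‖V (t - r)‖ ≤ c * Real.exp (ω * |t - s|) + 1 := by
    have : Continuous fun r => c * Real.exp (ω * |t - r|) := by fun_prop
    filter_upwards [(this.tendsto s).eventually_le_const (lt_add_one _)] with r hr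
    exact (hbound _).trans hr
  have horbit : HasDerivAt (fun r => V (t - r) (f s)) (-V (t - s) w) s := by
    simpa [Function.comp_def] using
      (hV.hasDerivAt (t - s) _ hw).scomp s ((hasDerivAt_id s).const_sub t)
  have hcont : Continuous fun r => V (t - r) f' :=
    (hV.continuous_apply f').comp (continuous_sub_left t)
  convert hasDerivAt_clm_apply_of_norm_le hlocal hcont.continuousAt horbit hf using 1
  rw [map_sub, neg_add_eq_sub]

-- Formally `E_m = ad_M^m V` solves `E_m' = A E_m + m B E_{m-1}`; `w` stands for `A E_m u`.
theorem exists_hasDerivAt_iteratedCommutator (hV : IsC0Group A V) (hM : HasCommutator A M B)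
    (hMB : Commute M B) (m : ℕ) (s : ℝ) {q : X × X} (hq : q ∈ A.graph) :
    ∃ w, (iteratedCommutator M m (V s) q.1, w) ∈ A.graph ∧
      HasDerivAt (fun r => iteratedCommutator M m (V r) q.1)
        (w + (m : ℝ) • B (iteratedCommutator M (m - 1) (V s) q.1)) s := by
  induction m generalizing q with
  | zero =>
    exact ⟨V s q.2, hV.map_mem_graph s q hq, by
      simpa [iteratedCommutator_zero] using hV.hasDerivAt s q hq⟩
  | succ m ih =>
    obtain ⟨w₁, hw₁, hd₁⟩ := ih hq
    obtain ⟨w₂, hw₂, hd₂⟩ := ih (hM q hq)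
    have hcomm : (m : ℝ) • (M (B (iteratedCommutator M (m - 1) (V s) q.1))
        - B (iteratedCommutator M (m - 1) (V s) (M q.1)))
          = (m : ℝ) • B (iteratedCommutator M m (V s) q.1) := by
      cases m with
      | zero => simp
      | succ k =>
        rw [iteratedCommutator_succ_apply, map_sub, ← mul_apply_eq_comp M B, hMB.eq]
        rfl
    have hd := ((M.restrictScalars ℝ).hasFDerivAt.comp_hasDerivAt s hd₁).fun_sub hd₂
    simp only [Function.comp_def, ContinuousLinearMap.coe_restrictScalars',
      ← iteratedCommutator_succ_apply] at hd
    refine ⟨M w₁ - B (iteratedCommutator M m (V s) q.1) - w₂, ?_, ?_⟩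
    · rw [iteratedCommutator_succ_apply]
      exact A.graph.sub_mem (hM _ hw₁) hw₂
    · refine hd.congr_deriv ?_
      rw [map_add, ContinuousLinearMap.map_smul_of_tower, Nat.add_sub_cancel]
      push_cast
      linear_combination (norm := module) hcomm

-- Duhamel: differentiating `V (t - r) (E_m(r) u)` in `r` cancels the term `A E_m u`.
theorem hasDerivAt_sub_iteratedCommutator_apply (hV : IsC0Group A V)
    (hbound : ∀ t, ‖V t‖ ≤ c * Real.exp (ω * |t|)) (hM : HasCommutator A M B)
    (hMB : Commute M B) (m : ℕ) (t s : ℝ) {q : X × X} (hq : q ∈ A.graph) :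
    HasDerivAt (fun r => V (t - r) (iteratedCommutator M (m + 1) (V r) q.1))
      (V (t - s) ((m + 1 : ℝ) • B (iteratedCommutator M m (V s) q.1))) s := by
  obtain ⟨w, hw, hd⟩ := hV.exists_hasDerivAt_iteratedCommutator hM hMB (m + 1) s hq
  simpa using hV.hasDerivAt_sub_apply hbound t hw hd

theorem norm_iteratedCommutator_apply_le (hV : IsC0Group A V)
    (hbound : ∀ t, ‖V t‖ ≤ c * Real.exp (ω * |t|)) (hM : HasCommutator A M B)
    (hMB : Commute M B) (hB : ‖B‖ ≤ b) (m : ℕ) {t : ℝ} (ht : 0 ≤ t) {q : X × X}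
    (hq : q ∈ A.graph) :
    ‖iteratedCommutator M m (V t) q.1‖ ≤ c * Real.exp (ω * t) * (c * b * t) ^ m * ‖q.1‖ := by
  induction m generalizing t with
  | zero =>
    simpa [iteratedCommutator_zero, abs_of_nonneg ht] using (V t).le_of_opNorm_le (hbound t) q.1
  | succ m ih =>
    have hderiv (s : ℝ) :=
      hV.hasDerivAt_sub_iteratedCommutator_apply hbound hM hMB m t s hq
    have hmajorant (s : ℝ) :
        HasDerivAt (fun r => c * Real.exp (ω * t) * (c * b * r) ^ (m + 1) * ‖q.1‖)
          (c * Real.exp (ω * t) * ((m + 1) * (c * b * s) ^ m * (c * b)) * ‖q.1‖) s := by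
      simpa using ((((hasDerivAt_id s).const_mul (c * b)).pow (m + 1)).const_mul
        (c * Real.exp (ω * t))).mul_const ‖q.1‖
    have hderiv_le (s : ℝ) (hs : s ∈ Set.Ico 0 t) :
        ‖V (t - s) ((m + 1 : ℝ) • B (iteratedCommutator M m (V s) q.1))‖
          ≤ c * Real.exp (ω * t) * ((m + 1) * (c * b * s) ^ m * (c * b)) * ‖q.1‖ := by
      have hexp : Real.exp (ω * t) = Real.exp (ω * (t - s)) * Real.exp (ω * s) := by
        rw [← Real.exp_add]; ring_nf
      have hVts : ‖V (t - s)‖ ≤ c * Real.exp (ω * (t - s)) := by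
        simpa [abs_of_nonneg (sub_nonneg.2 hs.2.le)] using hbound (t - s)
      calc _ ≤ c * Real.exp (ω * (t - s)) *
            ((m + 1) * (b * (c * Real.exp (ω * s) * (c * b * s) ^ m * ‖q.1‖))) := by
            refine (V (t - s)).le_of_opNorm_le_of_le hVts ?_
            rw [norm_smul, Real.norm_of_nonneg (by positivity)]
            gcongr
            exact B.le_of_opNorm_le_of_le hB (ih hs.1)
        _ = _ := by rw [hexp]; ring
    have hle := image_norm_le_of_norm_deriv_right_le_deriv_boundary
      (fun s _ => (hderiv s).continuousAt.continuousWithinAt)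
      (fun s _ => (hderiv s).hasDerivWithinAt)
      (by simp [hV.apply_zero, iteratedCommutator_succ_one]) hmajorant hderiv_le
      (Set.right_mem_Icc.2 ht)
    simpa [hV.apply_zero] using hle

theorem norm_iteratedCommutator_le (hV : IsC0Group A V) (hA : Dense (A.domain : Set X))
    (hbound : ∀ t, ‖V t‖ ≤ c * Real.exp (ω * |t|)) (hM : HasCommutator A M B)
    (hMB : Commute M B) (hB : ‖B‖ ≤ b) (m : ℕ) (t : ℝ) :
    ‖iteratedCommutator M m (V t)‖ ≤ c * Real.exp (ω * |t|) * (c * b * |t|) ^ m := by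
  have hc : 0 ≤ c := by simpa using (norm_nonneg _).trans (hbound 0)
  have hb : 0 ≤ b := (norm_nonneg B).trans hB
  wlog ht : 0 ≤ t generalizing A V B t
  · simpa using this (t := -t) hV.reverse hA (by simpa using fun t => hbound (-t))
      hM.neg hMB.neg_right (by rwa [norm_neg]) (by linarith)
  rw [abs_of_nonneg ht]
  refine ContinuousLinearMap.opNorm_le_bound _ (by positivity) fun u => ?_
  refine hA.induction (fun u hu => ?_) ?_ u
  · exact hV.norm_iteratedCommutator_apply_le hbound hM hMB hB m ht (A.mem_graph ⟨u, hu⟩)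
  · exact isClosed_le (by fun_prop) (by fun_prop)

theorem norm_pow_apply_le (hV : IsC0Group A V) (hA : Dense (A.domain : Set X))
    (hbound : ∀ t, ‖V t‖ ≤ c * Real.exp (ω * |t|)) (hM : HasCommutator A M B)
    (hMB : Commute M B) (hB : ‖B‖ ≤ b) {u : X} (hu : M u = 0) (m : ℕ) (t : ℝ) :
    ‖(M ^ m) (V t u)‖ ≤ c * Real.exp (ω * |t|) * (c * b * |t|) ^ m * ‖u‖ := by
  rw [← iteratedCommutator_apply_of_apply_eq_zero hu]
  exact ContinuousLinearMap.le_of_opNorm_le _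
    (hV.norm_iteratedCommutator_le hA hbound hM hMB hB m t) u

end IsC0Group

end C0Group

theorem ae_imp_of_forall_gt_ae_imp {α : Type*} [MeasurableSpace α] {μ : Measure α} {f : α → ℝ}
    {P : α → Prop} {ρ : ℝ} (h : ∀ a > ρ, ∀ᵐ x ∂μ, a ≤ f x → P x) : ∀ᵐ x ∂μ, ρ < f x → P x := by
  obtain ⟨a, -, ha, hlim⟩ := exists_seq_strictAnti_tendsto ρ
  filter_upwards [ae_all_iff.2 fun k => h (a k) (ha k)] with x hx hlt
  obtain ⟨k, hk⟩ := (hlim.eventually_le_const hlt).exists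
  exact hx k hk

section Multiplication

variable {α 𝕜 F G : Type*} [MeasurableSpace α] {μ : Measure α} [RCLike 𝕜] [NormedAddCommGroup F]
  [NormedSpace 𝕜 F] [NormedAddCommGroup G] [NormedSpace 𝕜 G] {p : ℝ≥0∞} [Fact (1 ≤ p)]

/-- `T : Lᵖ(μ; F) → Lᵖ(μ; G)` is pointwise multiplication by the operator-valued function `m`.
Multiplication by a scalar function `η` is encoded as `m x = η x • 1`. -/
def IsMultiplicationBy (m : α → F →L[𝕜] G) (T : Lp F p μ →L[𝕜] Lp G p μ) : Prop :=
  ∀ u, T u =ᵐ[μ] fun x => m x (u x)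

theorem exists_isMultiplicationBy {m : α → F →L[𝕜] G} (hm : AEStronglyMeasurable m μ) {C : ℝ}
    (hC : ∀ᵐ x ∂μ, ‖m x‖ ≤ C) : ∃ T : Lp F p μ →L[𝕜] Lp G p μ, IsMultiplicationBy m T := by
  have hmem : MemLp m ⊤ μ := memLp_top_of_bound hm C hC
  refine ⟨(ContinuousLinearMap.id 𝕜 (F →L[𝕜] G)).holderL μ ⊤ p p hmem.toLp, fun u => ?_⟩
  filter_upwards [(ContinuousLinearMap.id 𝕜 (F →L[𝕜] G)).coeFn_holder (r := p) hmem.toLp u,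
    hmem.coeFn_toLp] with x hx hmx
  rw [← hmx]
  exact hx

namespace IsMultiplicationBy

theorem commute {m₁ m₂ : α → F →L[𝕜] F} {T₁ T₂ : Lp F p μ →L[𝕜] Lp F p μ}
    (h₁ : IsMultiplicationBy m₁ T₁) (h₂ : IsMultiplicationBy m₂ T₂)
    (hcomm : ∀ x, Commute (m₁ x) (m₂ x)) : Commute T₁ T₂ := by
  ext1 u
  refine Lp.ext ?_
  filter_upwards [h₁ u, h₂ u, h₁ (T₂ u), h₂ (T₁ u)] with x hx₁ hx₂ hx₁₂ hx₂₁
  rw [mul_apply_eq_comp, mul_apply_eq_comp, hx₁₂, hx₂₁, hx₁, hx₂]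
  exact DFunLike.congr_fun (hcomm x).eq (u x)

theorem pow {m : α → F →L[𝕜] F} {T : Lp F p μ →L[𝕜] Lp F p μ} (h : IsMultiplicationBy m T)
    (k : ℕ) : IsMultiplicationBy (fun x => m x ^ k) (T ^ k) := by
  intro u
  induction k with
  | zero => rfl
  | succ k ih =>
    filter_upwards [h ((T ^ k) u), ih] with x hx hk
    rw [pow_succ', pow_succ', mul_apply_eq_comp, mul_apply_eq_comp, hx, hk]

variable {η : α → 𝕜} {M : Lp F p μ →L[𝕜] Lp F p μ}

theorem apply_eq_zero (hM : IsMultiplicationBy (fun x => η x • (1 : F →L[𝕜] F)) M) {s : Set α}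
    (hη : ∀ x ∈ s, η x = 0) {u : Lp F p μ} (hu : ∀ᵐ x ∂μ, x ∉ s → u x = 0) : M u = 0 := by
  rw [Lp.eq_zero_iff_ae_eq_zero]
  filter_upwards [hM u, hu] with x hx hux
  rw [hx]
  by_cases hxs : x ∈ s
  · simp [hη x hxs]
  · simp [hux hxs]

theorem norm_indicator_le (hM : IsMultiplicationBy (fun x => η x • (1 : F →L[𝕜] F)) M) {s : Set α}
    {a : ℝ} (ha : 0 < a) (hs : ∀ x ∈ s, a ≤ ‖η x‖) {w : Lp F p μ}
    (hw : MemLp (s.indicator w) p μ) : ‖hw.toLp‖ ≤ a⁻¹ * ‖M w‖ := by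
  refine Lp.norm_le_mul_norm_of_ae_le_mul ?_
  filter_upwards [hw.coeFn_toLp, hM w] with x hwx hMx
  rw [hwx, hMx]
  by_cases hx : x ∈ s
  · rw [Set.indicator_of_mem hx, le_inv_mul_iff₀ ha]
    simpa [norm_smul] using mul_le_mul_of_nonneg_right (hs x hx) (norm_nonneg (w x))
  · rw [Set.indicator_of_notMem hx, norm_zero]
    positivity

theorem ae_eq_zero_of_norm_pow_apply_le
    (hM : IsMultiplicationBy (fun x => η x • (1 : F →L[𝕜] F)) M) (hη : Measurable η)
    {w : Lp F p μ} {C r : ℝ} (hr : 0 ≤ r) (hw : ∀ k : ℕ, ‖(M ^ k) w‖ ≤ C * r ^ k) :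
    ∀ᵐ x ∂μ, r < ‖η x‖ → w x = 0 := by
  refine ae_imp_of_forall_gt_ae_imp fun a ha => ?_
  have ha₀ : 0 < a := hr.trans_lt ha
  have hmem : MemLp ({x | a ≤ ‖η x‖}.indicator w) p μ :=
    (Lp.memLp w).indicator (measurableSet_le measurable_const hη.norm)
  have hle (k : ℕ) : ‖hmem.toLp‖ ≤ C * (r / a) ^ k := by
    have hpow : IsMultiplicationBy (fun x => η x ^ k • (1 : F →L[𝕜] F)) (M ^ k) := by
      simpa [smul_pow] using hM.pow k
    calc ‖hmem.toLp‖ ≤ (a ^ k)⁻¹ * ‖(M ^ k) w‖ :=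
          hpow.norm_indicator_le (pow_pos ha₀ k)
            (fun x hx => by rw [norm_pow]; exact pow_le_pow_left₀ ha₀.le hx k) hmem
      _ ≤ (a ^ k)⁻¹ * (C * r ^ k) := by gcongr; exact hw k
      _ = C * (r / a) ^ k := by rw [div_pow]; ring
  have hlim : Tendsto (fun k : ℕ => C * (r / a) ^ k) atTop (𝓝 0) := by
    simpa using (tendsto_pow_atTop_nhds_zero_of_lt_one (by positivity)
      ((div_lt_one ha₀).2 ha)).const_mul C
  have hzero : hmem.toLp = 0 := norm_le_zero_iff.1 (ge_of_tendsto' hlim hle)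
  have hind : {x | a ≤ ‖η x‖}.indicator w =ᵐ[μ] 0 :=
    hmem.coeFn_toLp.symm.trans (Lp.eq_zero_iff_ae_eq_zero.1 hzero)
  filter_upwards [hind] with x hx hax
  have hxS : x ∈ {x | a ≤ ‖η x‖} := hax
  rwa [Set.indicator_of_mem hxS] at hx

end IsMultiplicationBy

end Multiplication

section Cutoff

variable {E : Type*} [NormedAddCommGroup E] [NormedSpace ℝ E] [FiniteDimensional ℝ E]

theorem lipschitzWith_normed_convolution {F : Type*} [NormedAddCommGroup F] [NormedSpace ℝ F]
    [MeasurableSpace E] [BorelSpace E] {μ : Measure E} [IsLocallyFiniteMeasure μ]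
    [μ.IsOpenPosMeasure] (φ : ContDiffBump (0 : E)) {g : E → F} {C : ℝ≥0}
    (hg : LipschitzWith C g) :
    LipschitzWith C (φ.normed μ ⋆[ContinuousLinearMap.lsmul ℝ ℝ, μ] g) := by
  have hint (x : E) : Integrable (fun z => φ.normed μ z • g (x - z)) μ :=
    (φ.continuous_normed.smul
      (hg.continuous.comp (continuous_sub_left x))).integrable_of_hasCompactSupport
        φ.hasCompactSupport_normed.smul_right
  refine LipschitzWith.of_dist_le_mul fun x y => ?_
  rw [dist_eq_norm, convolution_lsmul, convolution_lsmul, ← integral_sub (hint x) (hint y)]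
  calc _ ≤ ∫ z, φ.normed μ z * (C * dist x y) ∂μ := by
        refine norm_integral_le_of_norm_le (φ.integrable_normed.mul_const _)
          (ae_of_all _ fun z => ?_)
        rw [← smul_sub, norm_smul, Real.norm_of_nonneg (φ.nonneg_normed z), ← dist_eq_norm]
        refine mul_le_mul_of_nonneg_left ?_ (φ.nonneg_normed z)
        simpa using hg.dist_le_mul (x - z) (y - z)
    _ = C * dist x y := by rw [integral_mul_const, φ.integral_normed, one_mul]

theorem exists_contDiff_lipschitzWith_dist_le {F : Type*} [NormedAddCommGroup F] [NormedSpace ℝ F]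
    [CompleteSpace F] {g : E → F} {C : ℝ≥0} (hg : LipschitzWith C g) {ε : ℝ} (hε : 0 < ε) :
    ∃ η : E → F, ContDiff ℝ (⊤ : ℕ∞) η ∧ LipschitzWith C η ∧
      ∀ x δ, (∀ y ∈ Metric.ball x ε, dist (g y) (g x) ≤ δ) → dist (η x) (g x) ≤ δ := by
  borelize E
  let φ : ContDiffBump (0 : E) := ⟨ε / 2, ε, half_pos hε, half_lt_self hε⟩
  refine ⟨_, ?_, lipschitzWith_normed_convolution (μ := .addHaar) φ hg, fun x δ h =>
    φ.dist_normed_convolution_le hg.continuous.aestronglyMeasurable h⟩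
  exact φ.hasCompactSupport_normed.contDiff_convolution_left _ φ.contDiff_normed
    hg.continuous.locallyIntegrable

theorem exists_smooth_lipschitzWith_one_cutoff (K : Set E) {ρ a : ℝ} (hρa : ρ < a) :
    ∃ η : E → ℝ, ContDiff ℝ (⊤ : ℕ∞) η ∧ LipschitzWith 1 η ∧ (∃ C, ∀ x, |η x| ≤ C) ∧
      (∀ x ∈ K, η x = 0) ∧ ∀ x, a ≤ Metric.infDist x K → ρ < η x := by
  obtain ⟨ε, hε, hρε⟩ : ∃ ε > 0, ρ + 2 * ε < a := ⟨(a - ρ) / 3, by linarith, by linarith⟩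
  let g : E → ℝ := fun x => max (min (Metric.infDist x K) a - ε) 0
  have hg : LipschitzWith 1 g := by
    have : LipschitzWith 1 fun x => min (Metric.infDist x K) a - ε := by
      simpa using ((Metric.lipschitz_infDist_pt K).min_const a).sub (LipschitzWith.const ε)
    exact this.max_const 0
  have hg_zero {x y : E} (hx : x ∈ K) (hy : dist y x < ε) : g y = 0 := by
    have := Metric.infDist_le_dist_of_mem (x := y) hx
    exact max_eq_right (by linarith [min_le_left (Metric.infDist y K) a])
  obtain ⟨η, hsmooth, hlip, hη⟩ := exists_contDiff_lipschitzWith_dist_le hg hε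
  have hη_near (x : E) : |η x - g x| ≤ ε := by
    refine hη x ε fun y hy => (hg.dist_le_mul y x).trans ?_
    simpa using (Metric.mem_ball.1 hy).le
  refine ⟨η, hsmooth, hlip, ⟨ε + |a|, fun x => ?_⟩, fun x hx => ?_, fun x hx => ?_⟩
  · have hgx : |g x| ≤ |a| := by
      rw [abs_of_nonneg (le_max_right _ _)]
      refine max_le ?_ (abs_nonneg a)
      linarith [min_le_right (Metric.infDist x K) a, le_abs_self a]
    calc |η x| = |(η x - g x) + g x| := by rw [sub_add_cancel]
      _ ≤ ε + |a| := (abs_add_le _ _).trans (add_le_add (hη_near x) hgx)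
  · have hx₀ : g x = 0 := hg_zero hx (by simpa using hε)
    have : dist (η x) (g x) ≤ 0 :=
      hη x 0 fun y hy => by rw [hx₀, hg_zero hx hy, dist_self]
    rw [dist_le_zero.1 this, hx₀]
  · have hgx : a - ε ≤ g x := by
      simp only [g, min_eq_right hx, le_max_left]
    linarith [(abs_le.1 (hη_near x)).1]

end Cutoff

section FirstOrderSystem

variable {𝕜 E F : Type*} [RCLike 𝕜] [NormedAddCommGroup E] [NormedSpace ℝ E]
  [MeasurableSpace E] {μ : Measure E} [NormedAddCommGroup F]
  [NormedSpace 𝕜 F] {p : ℝ≥0∞} [Fact (1 ≤ p)]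

/-- The operator `A` on `Lᵖ(μ; F)` behaves like a first order system with propagation speed `κ`: its
commutator with a bounded smooth `1`-Lipschitz function `η` is an operator of norm at most `κ` that
commutes with `η`. For a first order differential operator this commutator is multiplication by the
principal symbol at `∇η`. -/
def IsFirstOrder (A : Lp F p μ →ₗ.[𝕜] Lp F p μ) (κ : ℝ) : Prop :=
  ∀ η : E → ℝ, ContDiff ℝ (⊤ : ℕ∞) η → LipschitzWith 1 η → (∃ C, ∀ x, |η x| ≤ C) →
    ∀ M : Lp F p μ →L[𝕜] Lp F p μ,
      IsMultiplicationBy (fun x => (η x : 𝕜) • (1 : F →L[𝕜] F)) M →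
        ∃ B, HasCommutator A M B ∧ Commute M B ∧ ‖B‖ ≤ κ

theorem IsFirstOrder.smul {A : Lp F p μ →ₗ.[𝕜] Lp F p μ} {κ : ℝ} (hA : IsFirstOrder A κ) (a : 𝕜) :
    IsFirstOrder (a • A) (‖a‖ * κ) := by
  intro η hsmooth hlip hbdd M hM
  obtain ⟨B, hMA, hMB, hB⟩ := hA η hsmooth hlip hbdd M hM
  exact ⟨a • B, hMA.smul a, hMB.smul_right a,
    (norm_smul_le a B).trans (mul_le_mul_of_nonneg_left hB (norm_nonneg a))⟩

theorem exists_hasCommutator_of_ae_eq_mul {α : Type*} [MeasurableSpace α] {ν : Measure α}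
    {A : Lp F p ν →ₗ.[𝕜] Lp F p ν} (hA : Dense (A.domain : Set (Lp F p ν)))
    {M : Lp F p ν →L[𝕜] Lp F p ν} {η : α → 𝕜}
    (hM : IsMultiplicationBy (fun x => η x • (1 : F →L[𝕜] F)) M) {m : α → F →L[𝕜] F}
    (hm : AEStronglyMeasurable m ν) (hm_bdd : ∃ C, ∀ᵐ x ∂ν, ‖m x‖ ≤ C) {b : ℝ} (hb : 0 ≤ b)
    (hcomm : ∀ v : A.domain, ∃ h : M v ∈ A.domain,
      (M (A v) - A ⟨M v, h⟩ : Lp F p ν) =ᵐ[ν] (fun x => m x ((v : Lp F p ν) x)) ∧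
        ‖M (A v) - A ⟨M v, h⟩‖ ≤ b * ‖(v : Lp F p ν)‖) :
    ∃ B, HasCommutator A M B ∧ Commute M B ∧ ‖B‖ ≤ b := by
  obtain ⟨C, hC⟩ := hm_bdd
  obtain ⟨B, hB⟩ := exists_isMultiplicationBy (p := p) hm hC
  have hB_eq {v : A.domain} {w : Lp F p ν}
      (hmul : (M (A v) - w : Lp F p ν) =ᵐ[ν] fun x => m x ((v : Lp F p ν) x)) :
      B v = M (A v) - w :=
    Lp.ext ((hB v).trans hmul.symm)
  refine ⟨B, ?_, hM.commute hB fun x => (Commute.one_left (m x)).smul_left (η x),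
    B.opNorm_le_bound hb fun u => hA.induction (fun u hu => ?_) ?_ u⟩
  · rintro ⟨_, _⟩ hq
    obtain ⟨v, rfl, rfl⟩ := A.mem_graph_iff.1 hq
    obtain ⟨h, hmul, -⟩ := hcomm v
    rw [hB_eq hmul, sub_sub_cancel]
    exact A.mem_graph ⟨M v, h⟩
  · obtain ⟨h, hmul, hnorm⟩ := hcomm ⟨u, hu⟩
    exact (hB_eq hmul).symm ▸ hnorm
  · exact isClosed_le (by fun_prop) (by fun_prop)

theorem finite_propagation_speed_first_order_system_general [FiniteDimensional ℝ E] [BorelSpace E]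
    [NormedSpace ℝ F] [IsScalarTower ℝ 𝕜 F]
    {A : Lp F p μ →ₗ.[𝕜] Lp F p μ} {V : ℝ → Lp F p μ →L[𝕜] Lp F p μ} {c ω κ : ℝ}
    (hV : IsC0Group A V) (hA : Dense (A.domain : Set (Lp F p μ)))
    (hbound : ∀ t, ‖V t‖ ≤ c * Real.exp (ω * |t|)) (hκ : IsFirstOrder A κ) {K : Set E}
    {u : Lp F p μ} (hu : ∀ᵐ x ∂μ, x ∉ K → u x = 0) (t : ℝ) :
    ∀ᵐ x ∂μ, c * κ * |t| < Metric.infDist x K → V t u x = 0 := by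
  refine ae_imp_of_forall_gt_ae_imp fun a ha => ?_
  obtain ⟨η, hsmooth, hlip, ⟨C, hC⟩, hηK, hη⟩ := exists_smooth_lipschitzWith_one_cutoff K ha
  have hη_cont : Continuous fun x => (η x : 𝕜) := RCLike.continuous_ofReal.comp hlip.continuous
  obtain ⟨M, hM⟩ := exists_isMultiplicationBy (F := F) (p := p) (μ := μ)
    (m := fun x => (η x : 𝕜) • (1 : F →L[𝕜] F))
    (hη_cont.smul continuous_const).aestronglyMeasurable (C := C * ‖(1 : F →L[𝕜] F)‖)
    (ae_of_all _ fun x => by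
      simpa [norm_smul] using mul_le_mul_of_nonneg_right (hC x) (norm_nonneg (1 : F →L[𝕜] F)))
  obtain ⟨B, hMA, hMB, hB⟩ := hκ η hsmooth hlip ⟨C, hC⟩ M hM
  have hMu : M u = 0 := hM.apply_eq_zero (fun x hx => by simp [hηK x hx]) hu
  have hspeed : 0 ≤ c * κ * |t| := by
    have hc : 0 ≤ c := by simpa using (norm_nonneg _).trans (hbound 0)
    have : 0 ≤ κ := (norm_nonneg B).trans hB
    positivity
  have hpow (k : ℕ) :
      ‖(M ^ k) (V t u)‖ ≤ c * Real.exp (ω * |t|) * ‖u‖ * (c * κ * |t|) ^ k := by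
    rw [mul_right_comm]
    exact hV.norm_pow_apply_le hA hbound hMA hMB hB hMu k t
  filter_upwards [hM.ae_eq_zero_of_norm_pow_apply_le hη_cont.measurable hspeed hpow] with x hx hax
  refine hx ((hη x hax).trans_le ?_)
  simpa using le_abs_self (η x)

end FirstOrderSystem

/-- **Finite propagation speed for first order systems on `ℝⁿ`**
(McIntosh–Morris, Theorem 1 for systems on `L²(ℝⁿ, ℂᴺ)`). -/
theorem finite_propagation_speed_first_order_system
    (n N : ℕ) (hn : 1 ≤ n) (hN : 1 ≤ N)
    (Dom : Submodule ℂ (Lp (EuclideanSpace ℂ (Fin N)) 2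
      (volume : Measure (EuclideanSpace ℝ (Fin n)))))
    (hdense : Dense (Dom : Set (Lp (EuclideanSpace ℂ (Fin N)) 2
      (volume : Measure (EuclideanSpace ℝ (Fin n))))))
    (D : Lp (EuclideanSpace ℂ (Fin N)) 2 (volume : Measure (EuclideanSpace ℝ (Fin n))) →
      Lp (EuclideanSpace ℂ (Fin N)) 2 (volume : Measure (EuclideanSpace ℝ (Fin n))))
    (hDadd : ∀ u ∈ Dom, ∀ v ∈ Dom, D (u + v) = D u + D v)
    (hDsmul : ∀ (a : ℂ), ∀ u ∈ Dom, D (a • u) = a • D u)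
    (V : ℝ → Lp (EuclideanSpace ℂ (Fin N)) 2 (volume : Measure (EuclideanSpace ℝ (Fin n))) →L[ℂ]
      Lp (EuclideanSpace ℂ (Fin N)) 2 (volume : Measure (EuclideanSpace ℝ (Fin n))))
    (c ω : ℝ) (hc : 1 ≤ c) (hω : 0 ≤ ω)
    (hV0 : V 0 = ContinuousLinearMap.id ℂ _)
    (hVgrp : ∀ s t : ℝ, V (s + t) = (V s).comp (V t))
    (hVcont : ∀ u, Continuous fun t => V t u)
    (hVdom : ∀ t : ℝ, ∀ u ∈ Dom, V t u ∈ Dom)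
    (hVderiv : ∀ t : ℝ, ∀ u ∈ Dom,
      HasDerivAt (fun s => V s u) (Complex.I • V t (D u)) t)
    (hVD : ∀ t : ℝ, ∀ u ∈ Dom, V t (D u) = D (V t u))
    (hVbound : ∀ (t : ℝ) u, ‖V t u‖ ≤ c * Real.exp (ω * |t|) * ‖u‖)
    (κ : ℝ) (hκ : 0 < κ)
    (hcomm : ∀ (η : EuclideanSpace ℝ (Fin n) → ℝ), ContDiff ℝ (⊤ : ℕ∞) η →
      (∃ C, ∀ x, |η x| ≤ C) → (∃ G, ∀ x, ‖fderiv ℝ η x‖ ≤ G) →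
      ∀ Mη : Lp (EuclideanSpace ℂ (Fin N)) 2
          (volume : Measure (EuclideanSpace ℝ (Fin n))) →L[ℂ]
          Lp (EuclideanSpace ℂ (Fin N)) 2 (volume : Measure (EuclideanSpace ℝ (Fin n))),
        (∀ u, (Mη u : EuclideanSpace ℝ (Fin n) → EuclideanSpace ℂ (Fin N))
            =ᵐ[volume] fun x => (η x : ℂ) •
              (u : EuclideanSpace ℝ (Fin n) → EuclideanSpace ℂ (Fin N)) x) →
        (∀ u ∈ Dom, Mη u ∈ Dom) ∧
        (∃ mη : EuclideanSpace ℝ (Fin n) → Matrix (Fin N) (Fin N) ℂ,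
          AEStronglyMeasurable (fun x => Matrix.toEuclideanCLM (𝕜 := ℂ) (mη x)) volume ∧
          (∃ Cm, ∀ᵐ x ∂(volume : Measure (EuclideanSpace ℝ (Fin n))),
            ‖Matrix.toEuclideanCLM (𝕜 := ℂ) (mη x)‖ ≤ Cm) ∧
          ∀ u ∈ Dom,
            ((Mη (D u) - D (Mη u) : Lp (EuclideanSpace ℂ (Fin N)) 2
                (volume : Measure (EuclideanSpace ℝ (Fin n)))) :
              EuclideanSpace ℝ (Fin n) → EuclideanSpace ℂ (Fin N))
            =ᵐ[volume] fun x => Matrix.toEuclideanCLM (𝕜 := ℂ) (mη x)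
              ((u : EuclideanSpace ℝ (Fin n) → EuclideanSpace ℂ (Fin N)) x)) ∧
        (∀ u ∈ Dom, ∀ G : ℝ, (∀ x, ‖fderiv ℝ η x‖ ≤ G) →
          ‖Mη (D u) - D (Mη u)‖ ≤ κ * G * ‖u‖))
    (K : Set (EuclideanSpace ℝ (Fin n))) (hK : IsClosed K)
    (u : Lp (EuclideanSpace ℂ (Fin N)) 2 (volume : Measure (EuclideanSpace ℝ (Fin n))))
    (hu : ∀ᵐ x ∂(volume : Measure (EuclideanSpace ℝ (Fin n))), x ∉ K →
      (u : EuclideanSpace ℝ (Fin n) → EuclideanSpace ℂ (Fin N)) x = 0)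
    (t : ℝ) :
    ∀ᵐ x ∂(volume : Measure (EuclideanSpace ℝ (Fin n))), c * κ * |t| < Metric.infDist x K →
      (V t u : EuclideanSpace ℝ (Fin n) → EuclideanSpace ℂ (Fin N)) x = 0 := by
  have hV : IsC0Group (I • linearPMapOn Dom D hDadd hDsmul) V :=
    isC0Group_smul_of_domain hV0 hVgrp hVcont (fun t v => ⟨hVdom t v v.2, hVD t v v.2⟩)
      fun t v => hVderiv t v v.2
  have hD : IsFirstOrder (linearPMapOn Dom D hDadd hDsmul) κ := by
    intro η hsmooth hlip hbdd M hM
    have hgrad (x) : ‖fderiv ℝ η x‖ ≤ 1 := norm_fderiv_le_of_lipschitz ℝ hlip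
    obtain ⟨hdom, ⟨m, hm, hm_bdd, hmul⟩, hnorm⟩ := hcomm η hsmooth hbdd ⟨1, hgrad⟩ M hM
    exact exists_hasCommutator_of_ae_eq_mul hdense hM hm hm_bdd hκ.le fun v =>
      ⟨hdom v v.2, hmul v v.2, (hnorm v v.2 1 hgrad).trans_eq (by rw [mul_one])⟩
  exact finite_propagation_speed_first_order_system_general hV hdense
    (fun t => (V t).opNorm_le_bound (by positivity) (hVbound t)) (by simpa using hD.smul I) hu t
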